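/- Let w be a fully commutative element of a Coxeter group such that w is star reducible, via a sequence of lower (left or right) star operations, to a product w' = s₁⋯s_k of k mutually commuting generators. Then the maximum antichain size in the heap of w equals k, i.e., n(w) = k. -/

import Mathlib

open CoxeterSystem

def CommStep {B : Type*} (M : CoxeterMatrix B) (l l' : List B) : Prop :=
  ∃ (u v : List B) (a b : B), M a b = 2 ∧ l = u ++ a :: b :: v ∧ l' = u ++ b :: a :: v

def CommEquiv {B : Type*} (M : CoxeterMatrix B) : List B → List B → Prop :=
  Relation.ReflTransGen fun l l' => CommStep M l l' ∨ CommStep M l' l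

def FullyCommutative {B W : Type*} [Group W] {M : CoxeterMatrix B}
    (cs : CoxeterSystem M W) (w : W) : Prop :=
  ∀ l l', cs.IsReduced l → cs.wordProd l = w → cs.IsReduced l' → cs.wordProd l' = w →
    CommEquiv M l l'

def heapLe {B : Type*} (M : CoxeterMatrix B) (ω : List B) :
    Fin ω.length → Fin ω.length → Prop :=
  Relation.ReflTransGen fun i j => (i : ℕ) < (j : ℕ) ∧ M (ω.get i) (ω.get j) ≠ 2

def IsHeapAntichain {B : Type*} (M : CoxeterMatrix B) (ω : List B)
    (A : Finset (Fin ω.length)) : Prop :=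
  ∀ i ∈ A, ∀ j ∈ A, i ≠ j → ¬ heapLe M ω i j

noncomputable def heapN {B : Type*} (M : CoxeterMatrix B) (ω : List B) : ℕ :=
  sSup {n | ∃ A : Finset (Fin ω.length), IsHeapAntichain M ω A ∧ A.card = n}

/-- A single lower (left or right) star operation on a fully commutative element:
removal of the leftmost letter of a reduced word starting with two non-commuting
letters, or of the rightmost letter of a reduced word ending in two non-commuting
letters. -/
def LowerStarStep {B W : Type*} [Group W] {M : CoxeterMatrix B}
    (cs : CoxeterSystem M W) (x y : W) : Prop :=
  ∃ (l : List B) (a b : B), 3 ≤ M a b ∧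
    ((cs.IsReduced (a :: b :: l) ∧ x = cs.wordProd (a :: b :: l) ∧ y = cs.wordProd (b :: l)) ∨
     (cs.IsReduced (l ++ [b, a]) ∧ x = cs.wordProd (l ++ [b, a]) ∧ y = cs.wordProd (l ++ [b])))

/-!
Up to isomorphism, the heap of a word depends only on its commutation class, so a fully commutative
element `w` has a well-defined `n(w)`. In the heap of `a b ⋯` with `a` and `b` not commuting, the
first position lies below the second, so in an antichain it can be traded for the second:
deleting `a` does not change `n`. Right star operations are left ones on reversed words.
Hence `n(w) = n(s₁ ⋯ s_k)`, which is `k` as soon as the word `s₁ ⋯ s_k` is reduced. For this,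
consider the geometric representation: a word avoiding `s_i` cannot change the `s_i`-coordinate
of a vector, whereas `s₁ ⋯ s_k` sends the simple root of `s_i` to its negative. So every word for
`s₁ ⋯ s_k` contains all `k` letters.
-/

section Heap

variable {B : Type*} {M : CoxeterMatrix B} {ω ω' : List B}

open Relation

lemma IsHeapAntichain.card_le_heapN {A : Finset (Fin ω.length)} (hA : IsHeapAntichain M ω A) :
    A.card ≤ heapN M ω := by
  refine le_csSup ⟨ω.length, ?_⟩ ⟨A, hA, rfl⟩
  rintro _ ⟨A', -, rfl⟩
  exact card_finset_fin_le A'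

lemma heapN_le {n : ℕ} (h : ∀ A, IsHeapAntichain M ω A → A.card ≤ n) : heapN M ω ≤ n := by
  refine csSup_le ⟨0, ∅, by simp [IsHeapAntichain], rfl⟩ ?_
  rintro _ ⟨A, hA, rfl⟩
  exact h A hA

lemma IsHeapAntichain.eq_of_symmGen {A : Finset (Fin ω.length)} (hA : IsHeapAntichain M ω A)
    {i j : Fin ω.length} (hi : i ∈ A) (hj : j ∈ A) (h : SymmGen (heapLe M ω) i j) : i = j := by
  by_contra hij
  exact h.elim (hA i hi j hj hij) (hA j hj i hi (Ne.symm hij))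

lemma heapN_le_of_reflects_symmGen (g : Fin ω.length → Fin ω'.length)
    (hg : ∀ i j, heapLe M ω' (g i) (g j) → SymmGen (heapLe M ω) i j) :
    heapN M ω ≤ heapN M ω' := by
  classical
  refine heapN_le fun A hA ↦ ?_
  have hinj : Set.InjOn g A := fun i hi j hj hij ↦
    hA.eq_of_symmGen hi hj (hg i j (hij ▸ .refl))
  rw [← Finset.card_image_of_injOn hinj]
  refine IsHeapAntichain.card_le_heapN fun p hp q hq hpq h ↦ ?_
  obtain ⟨i, hi, rfl⟩ := Finset.mem_image.1 hp
  obtain ⟨j, hj, rfl⟩ := Finset.mem_image.1 hq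
  exact hpq (congrArg g (hA.eq_of_symmGen hi hj (hg i j h)))

lemma heapN_le_of_equiv (e : Fin ω.length ≃ Fin ω'.length)
    (he : ∀ i j, heapLe M ω i j → SymmGen (heapLe M ω') (e i) (e j)) :
    heapN M ω' ≤ heapN M ω :=
  heapN_le_of_reflects_symmGen e.symm fun i j h ↦ by simpa using he _ _ h

lemma heapLe.le {i j : Fin ω.length} (h : heapLe M ω i j) : i ≤ j := by
  induction h with
  | refl => exact le_rfl
  | tail _ hstep ih => exact ih.trans hstep.1.le

lemma heapN_reverse_le (ω : List B) : heapN M ω.reverse ≤ heapN M ω := by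
  let e : Fin ω.length ≃ Fin ω.reverse.length :=
    Fin.revPerm.trans (finCongr ω.length_reverse.symm)
  have get_e (i : Fin ω.length) : ω.reverse.get (e i) = ω.get i := by
    simp only [e, List.get_eq_getElem, List.getElem_reverse, Equiv.trans_apply,
      finCongr_apply, Fin.val_cast, Fin.revPerm_apply, Fin.val_rev]
    congr 1
    omega
  refine heapN_le_of_equiv e fun i j h ↦ .inr (ReflTransGen.swap _ _ (h.lift e ?_))
  rintro i j ⟨hij, hM⟩
  refine ⟨Fin.rev_lt_rev.2 hij, ?_⟩
  rwa [get_e, get_e, M.symmetric]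

lemma heapN_reverse (ω : List B) : heapN M ω.reverse = heapN M ω :=
  (heapN_reverse_le ω).antisymm (by simpa using heapN_reverse_le (M := M) ω.reverse)

lemma heapLe.cons_succ (a : B) {i j : Fin ω.length} (h : heapLe M ω i j) :
    heapLe M (a :: ω) i.succ j.succ :=
  h.lift Fin.succ fun _ _ hstep ↦ ⟨by simpa using hstep.1, by simpa using hstep.2⟩

lemma heapLe.exists_succ_of_cons {a : B} {i : Fin ω.length} {q : Fin (a :: ω).length}
    (h : heapLe M (a :: ω) i.succ q) : ∃ j : Fin ω.length, q = j.succ ∧ heapLe M ω i j := by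
  induction h with
  | refl => exact ⟨i, rfl, .refl⟩
  | @tail _ q _ hstep ih =>
    obtain ⟨p, rfl, hip⟩ := ih
    obtain ⟨j, rfl⟩ := Fin.exists_succ_eq.2 (Fin.ne_zero_of_lt hstep.1)
    exact ⟨j, rfl, hip.tail ⟨by simpa using hstep.1, by simpa using hstep.2⟩⟩

lemma heapLe.of_cons_succ {a : B} {i j : Fin ω.length}
    (h : heapLe M (a :: ω) i.succ j.succ) : heapLe M ω i j := by
  obtain ⟨j', hj, hij⟩ := h.exists_succ_of_cons
  rwa [Fin.succ_injective _ hj]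

lemma heapN_le_heapN_cons (a : B) (ω : List B) : heapN M ω ≤ heapN M (a :: ω) :=
  heapN_le_of_reflects_symmGen Fin.succ fun _ _ h ↦ .inl h.of_cons_succ

lemma heapN_cons_cons {a b : B} (hab : M a b ≠ 2) (ω : List B) :
    heapN M (a :: b :: ω) = heapN M (b :: ω) := by
  refine le_antisymm ?_ (heapN_le_heapN_cons a (b :: ω))
  let z : Fin (b :: ω).length := 0
  have hz : heapLe M (a :: b :: ω) 0 z.succ := .single ⟨z.succ_pos, by simpa [z] using hab⟩
  refine heapN_le_of_reflects_symmGen (Fin.cases z id) fun i j h ↦ ?_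
  cases i using Fin.cases with
  | zero =>
    cases j using Fin.cases with
    | zero => exact .inl .refl
    | succ j => exact .inl (hz.trans (heapLe.cons_succ a h))
  | succ i =>
    cases j using Fin.cases with
    | zero =>
      obtain rfl : i = z := Fin.le_zero_iff.1 h.le
      exact .inr hz
    | succ j => exact .inl (heapLe.cons_succ a h)

lemma heapN_append_pair {a b : B} (hab : M a b ≠ 2) (ω : List B) :
    heapN M (ω ++ [b, a]) = heapN M (ω ++ [b]) := by
  rw [← heapN_reverse, ← heapN_reverse (ω ++ [b])]
  simpa using heapN_cons_cons hab ω.reverse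

lemma heapLe.eq_of_pairwise_eq_two (hω : ω.Pairwise fun a b ↦ M a b = 2) {i j : Fin ω.length}
    (h : heapLe M ω i j) : i = j := by
  induction h with
  | refl => rfl
  | tail _ hstep _ => exact absurd (List.pairwise_iff_get.1 hω _ _ hstep.1) hstep.2

lemma heapN_eq_length_of_pairwise_eq_two (hω : ω.Pairwise fun a b ↦ M a b = 2) :
    heapN M ω = ω.length := by
  refine le_antisymm (heapN_le fun A _ ↦ card_finset_fin_le A) ?_
  have huniv : IsHeapAntichain M ω Finset.univ := fun _ _ _ _ hij h ↦
    hij (h.eq_of_pairwise_eq_two hω)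
  simpa using huniv.card_le_heapN

end Heap

section Commutation

variable {B : Type*} {M : CoxeterMatrix B} {ω ω' : List B}

open Relation

lemma CommStep.symm (h : CommStep M ω ω') : CommStep M ω' ω := by
  obtain ⟨u, v, a, b, hab, rfl, rfl⟩ := h
  exact ⟨u, v, b, a, by rwa [M.symmetric], rfl, rfl⟩

lemma CommStep.commEquiv (h : CommStep M ω ω') : CommEquiv M ω ω' :=
  .single (.inl h)

lemma CommStep.reverse (h : CommStep M ω ω') : CommStep M ω.reverse ω'.reverse := by
  obtain ⟨u, v, a, b, hab, rfl, rfl⟩ := h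
  exact ⟨v.reverse, u.reverse, b, a, by rwa [M.symmetric], by simp, by simp⟩

lemma CommStep.erase [DecidableEq B] (h : CommStep M ω ω') (c : B) :
    CommEquiv M (ω.erase c) (ω'.erase c) := by
  obtain ⟨u, v, a, b, hab, rfl, rfl⟩ := h
  by_cases hu : c ∈ u
  · simp only [List.erase_append_left _ hu]
    exact CommStep.commEquiv ⟨u.erase c, v, a, b, hab, rfl, rfl⟩
  simp only [List.erase_append_right _ hu]
  by_cases hc : c = a ∨ c = b
  · have herase : (a :: b :: v).erase c = (b :: a :: v).erase c := by
      grind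
    rw [herase]
    exact .refl
  · obtain ⟨hca, hcb⟩ := not_or.1 hc
    have herase (x y : B) (hx : c ≠ x) (hy : c ≠ y) :
        (x :: y :: v).erase c = x :: y :: v.erase c := by
      grind
    rw [herase a b hca hcb, herase b a hcb hca]
    exact CommStep.commEquiv ⟨u, v.erase c, a, b, hab, rfl, rfl⟩

lemma CommEquiv.map {f : List B → List B}
    (hf : ∀ l l', CommStep M l l' → CommEquiv M (f l) (f l')) (h : CommEquiv M ω ω') :
    CommEquiv M (f ω) (f ω') :=
  h.lift' f fun l l' hstep ↦ hstep.elim (hf l l') fun h' ↦ hf l l' h'.symm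

lemma CommEquiv.reverse (h : CommEquiv M ω ω') : CommEquiv M ω.reverse ω'.reverse :=
  h.map fun _ _ hstep ↦ hstep.reverse.commEquiv

lemma CommEquiv.of_cons {a : B} (h : CommEquiv M (a :: ω) (a :: ω')) : CommEquiv M ω ω' := by
  classical
  simpa using h.map fun _ _ hstep ↦ hstep.erase a

lemma swap_succ_lt_swap_succ {n i j : ℕ} (hij : i < j) (hn : ¬(i = n ∧ j = n + 1)) :
    Equiv.swap n (n + 1) i < Equiv.swap n (n + 1) j := by
  simp only [Equiv.swap_apply_def]
  split_ifs <;> omega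

lemma getElem?_append_cons_cons_swap {α : Type*} (u v : List α) (a b : α) (i : ℕ) :
    (u ++ b :: a :: v)[Equiv.swap u.length (u.length + 1) i]? = (u ++ a :: b :: v)[i]? := by
  simp only [Equiv.swap_apply_def]
  grind

lemma CommStep.exists_equiv (h : CommStep M ω ω') :
    ∃ e : Fin ω.length ≃ Fin ω'.length, ∀ i j, heapLe M ω i j → heapLe M ω' (e i) (e j) := by
  obtain ⟨u, v, a, b, hab, rfl, rfl⟩ := h
  let e : Fin (u ++ a :: b :: v).length ≃ Fin (u ++ b :: a :: v).length :=
    (finCongr (by simp)).trans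
      (Equiv.swap ⟨u.length, by simp⟩ ⟨u.length + 1, by simp⟩)
  have val_e (i : Fin (u ++ a :: b :: v).length) :
      (e i : ℕ) = Equiv.swap u.length (u.length + 1) i :=
    Fin.val_injective.map_swap _ _ _
  have get_e (i : Fin (u ++ a :: b :: v).length) :
      (u ++ b :: a :: v).get (e i) = (u ++ a :: b :: v).get i := by
    have hswap := getElem?_append_cons_cons_swap u v a b i
    rw [← val_e, List.getElem?_eq_getElem (e i).2, List.getElem?_eq_getElem i.2] at hswap
    exact Option.some_injective _ hswap
  refine ⟨e, fun i j h ↦ h.lift e ?_⟩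
  rintro i j ⟨hij, hM⟩
  refine ⟨?_, by rwa [get_e, get_e]⟩
  rw [val_e, val_e]
  refine swap_succ_lt_swap_succ hij ?_
  rintro ⟨hi, hj⟩
  exact hM (by simpa [hi, hj, List.getElem_append_right] using hab)

lemma CommStep.heapN_eq (h : CommStep M ω ω') : heapN M ω = heapN M ω' := by
  have hle {l l' : List B} (hstep : CommStep M l l') : heapN M l' ≤ heapN M l := by
    obtain ⟨e, he⟩ := hstep.exists_equiv
    exact heapN_le_of_equiv e fun i j hij ↦ .inl (he i j hij)
  exact (hle h.symm).antisymm (hle h)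

lemma CommEquiv.heapN_eq (h : CommEquiv M ω ω') : heapN M ω = heapN M ω' := by
  induction h with
  | refl => rfl
  | tail _ hstep ih => exact ih.trans (hstep.elim CommStep.heapN_eq fun h' ↦ h'.heapN_eq.symm)

end Commutation

section DihedralReflections

open Real Polynomial.Chebyshev

lemma eval_S_two_mul_cos_pi_div {p : ℕ} (hp : 2 ≤ p) :
    (S ℝ (p - 1)).eval (2 * cos (π / p)) = 0 := by
  have hp0 : (p : ℝ) ≠ 0 := by positivity
  have hsin : sin (π / p) ≠ 0 :=
    (sin_pos_of_pos_of_lt_pi (by positivity)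
      (div_lt_self pi_pos (by exact_mod_cast hp))).ne'
  refine (mul_eq_zero.1 ?_).resolve_right hsin
  rw [S_two_mul_real_cos, ← sin_pi]
  congr 1
  push_cast
  field_simp
  ring

lemma eval_S_add_eval_S_sub_one_two_mul_cos {p : ℕ} (hp : 1 ≤ p) :
    (S ℝ p).eval (2 * cos (2 * π / (2 * p + 1))) +
      (S ℝ (p - 1)).eval (2 * cos (2 * π / (2 * p + 1))) = 0 := by
  set θ := 2 * π / (2 * p + 1) with hθ
  have hp1 : (1 : ℝ) ≤ p := by exact_mod_cast hp
  have hsin : sin θ ≠ 0 := by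
    refine (sin_pos_of_pos_of_lt_pi (by positivity) ?_).ne'
    rw [hθ, div_lt_iff₀ (by positivity)]
    nlinarith [pi_pos]
  have hangle : (((p : ℤ) - 1 : ℤ) + 1 : ℝ) * θ = 2 * π - ((p : ℤ) + 1 : ℝ) * θ := by
    rw [hθ]
    push_cast
    field_simp
    ring
  refine (mul_eq_zero.1 ?_).resolve_right hsin
  rw [add_mul, S_two_mul_real_cos, S_two_mul_real_cos, hangle, sin_two_pi_sub, add_neg_cancel]

variable {V : Type*} [AddCommGroup V] [Module ℝ V] {x y : V} {f g : Module.Dual ℝ V}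

lemma reflection_mul_reflection_pow_eq_one (hf : f x = 2) (hg : g y = 2) {m : ℕ} (hm : 3 ≤ m)
    (hfg : f y * g x = 4 * cos (π / m) ^ 2) :
    (Module.reflection hf * Module.reflection hg) ^ m = 1 := by
  have ht : 2 * cos (2 * π / m) = f y * g x - 2 := by
    rw [hfg, mul_div_assoc, cos_two_mul]
    ring
  refine LinearEquiv.ext fun v ↦ ?_
  rw [Module.reflection_mul_reflection_pow_apply hf hg m v _ ht]
  obtain ⟨p, rfl | rfl⟩ := m.even_or_odd'
  · have hS := eval_S_two_mul_cos_pi_div (p := p) (by omega)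
    have hidx₁ : (((2 * p : ℕ) : ℤ) - 2) / 2 = p - 1 := by omega
    have hidx₂ : (((2 * p : ℕ) : ℤ) - 1) / 2 = p - 1 := by omega
    have hangle : 2 * π / ((2 * p : ℕ) : ℝ) = π / p := by
      push_cast
      exact mul_div_mul_left _ _ two_ne_zero
    rw [hidx₁, hidx₂, hangle, hS]
    simp
  · have hS := eval_S_add_eval_S_sub_one_two_mul_cos (p := p) (by omega)
    have hidx₁ : (((2 * p + 1 : ℕ) : ℤ) - 1) / 2 = p := by omega
    have hidx₂ : (((2 * p + 1 : ℕ) : ℤ) - 3) / 2 = p - 1 := by omega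
    have hidx₃ : ((2 * p + 1 : ℕ) : ℤ) / 2 = p := by omega
    have hidx₄ : (((2 * p + 1 : ℕ) : ℤ) - 2) / 2 = p - 1 := by omega
    rw [hidx₁, hidx₂, hidx₃, hidx₄]
    push_cast
    simp [hS]

end DihedralReflections

section OrthogonalReflections

variable {R V : Type*} [CommRing R] [AddCommGroup V] [Module R V] {x y : V}
  {f g : Module.Dual R V}

lemma reflection_mul_reflection_sq_eq_one (hf : f x = 2) (hg : g y = 2) (hfy : f y = 0)
    (hgx : g x = 0) : (Module.reflection hf * Module.reflection hg) ^ 2 = 1 := by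
  refine LinearEquiv.ext fun v ↦ ?_
  simp only [pow_two, LinearEquiv.mul_apply, Module.reflection_apply, map_sub, map_smul, hf, hg,
    hfy, hgx, LinearEquiv.coe_one, id_eq]
  module

end OrthogonalReflections

section GeometricRepresentation

open Real

variable {B W : Type*} [Group W] {M : CoxeterMatrix B}

/-- The linear form on `B →₀ ℝ` (the space with basis the simple roots) pairing a vector with the
simple coroot `i`, i.e. twice the standard bilinear form against the simple root `i`. The entry
`M i j = 0` stands for `m(i, j) = ∞`; there `π / 0 = 0` yields the usual coefficient `-2`. -/
noncomputable def simpleCoroot (M : CoxeterMatrix B) (i : B) : Module.Dual ℝ (B →₀ ℝ) :=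
  Finsupp.linearCombination ℝ fun j ↦ -2 * cos (π / M i j)

lemma simpleCoroot_single (i j : B) :
    simpleCoroot M i (Finsupp.single j 1) = -2 * cos (π / M i j) := by
  simp [simpleCoroot]

lemma simpleCoroot_single_self (i : B) : simpleCoroot M i (Finsupp.single i 1) = 2 := by
  simp [simpleCoroot_single]

lemma simpleCoroot_single_of_eq_two {i j : B} (h : M i j = 2) :
    simpleCoroot M i (Finsupp.single j 1) = 0 := by
  simp [simpleCoroot_single, h]

/-- The reflection of `B →₀ ℝ` in the simple root `i`, by which the generator `i` acts in the
geometric representation. -/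
noncomputable def simpleRootReflection (M : CoxeterMatrix B) (i : B) :
    (B →₀ ℝ) ≃ₗ[ℝ] (B →₀ ℝ) :=
  Module.reflection (simpleCoroot_single_self (M := M) i)

lemma simpleRootReflection_apply (i : B) (v : B →₀ ℝ) :
    simpleRootReflection M i v = v - simpleCoroot M i v • Finsupp.single i 1 :=
  Module.reflection_apply _ _

lemma simpleRootReflection_single_of_eq_two {i j : B} (h : M i j = 2) :
    simpleRootReflection M i (Finsupp.single j 1) = Finsupp.single j 1 := by
  rw [simpleRootReflection_apply, simpleCoroot_single_of_eq_two h, zero_smul, sub_zero]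

lemma isLiftable_simpleRootReflection : M.IsLiftable (simpleRootReflection M) := by
  intro i j
  obtain rfl | hij := eq_or_ne i j
  · rw [M.diagonal, pow_one]
    exact mul_eq_one_iff_eq_inv.2 (Module.reflection_inv (simpleCoroot_single_self i)).symm
  have hne_one : M i j ≠ 1 := M.off_diagonal i j hij
  obtain hinf | htwo | hthree : M i j = 0 ∨ M i j = 2 ∨ 3 ≤ M i j := by omega
  · rw [hinf, pow_zero]
  · rw [htwo]
    exact reflection_mul_reflection_sq_eq_one _ _ (simpleCoroot_single_of_eq_two htwo)
      (simpleCoroot_single_of_eq_two ((M.symmetric j i).trans htwo))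
  · refine reflection_mul_reflection_pow_eq_one _ _ hthree ?_
    rw [simpleCoroot_single, simpleCoroot_single, M.symmetric j i]
    ring

variable (cs : CoxeterSystem M W)

/-- The geometric representation of a Coxeter group on the real space spanned by its simple
roots. -/
noncomputable def geometricRep : W →* ((B →₀ ℝ) ≃ₗ[ℝ] (B →₀ ℝ)) :=
  cs.lift ⟨simpleRootReflection M, isLiftable_simpleRootReflection⟩

lemma geometricRep_wordProd_cons_apply (a : B) (ω : List B) (v : B →₀ ℝ) :
    geometricRep cs (cs.wordProd (a :: ω)) v =
      simpleRootReflection M a (geometricRep cs (cs.wordProd ω) v) := by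
  have hsimple : geometricRep cs (cs.simple a) = simpleRootReflection M a :=
    cs.lift_apply_simple isLiftable_simpleRootReflection a
  rw [wordProd_cons, map_mul, LinearEquiv.mul_apply, hsimple]

lemma geometricRep_wordProd_apply_of_notMem {ω : List B} {i : B} (hi : i ∉ ω) (v : B →₀ ℝ) :
    geometricRep cs (cs.wordProd ω) v i = v i := by
  induction ω with
  | nil => simp
  | cons a ω ih =>
    obtain ⟨hia, hiω⟩ := List.ne_and_not_mem_of_not_mem_cons hi
    simp [geometricRep_wordProd_cons_apply, simpleRootReflection_apply, ih hiω,
      Finsupp.single_eq_of_ne hia]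

lemma geometricRep_wordProd_single_of_forall {ω : List B} {i : B} (h : ∀ a ∈ ω, M a i = 2) :
    geometricRep cs (cs.wordProd ω) (Finsupp.single i 1) = Finsupp.single i 1 := by
  induction ω with
  | nil => simp
  | cons a ω ih =>
    obtain ⟨ha, hω⟩ := List.forall_mem_cons.1 h
    rw [geometricRep_wordProd_cons_apply, ih hω, simpleRootReflection_single_of_eq_two ha]

lemma geometricRep_wordProd_single_of_mem {ω : List B} (hω : ω.Pairwise fun a b ↦ M a b = 2)
    {i : B} (hi : i ∈ ω) :
    geometricRep cs (cs.wordProd ω) (Finsupp.single i 1) = -Finsupp.single i 1 := by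
  induction ω with
  | nil => simp at hi
  | cons a ω ih =>
    obtain ⟨ha, hω'⟩ := List.pairwise_cons.1 hω
    rw [geometricRep_wordProd_cons_apply]
    obtain rfl | hiω := List.mem_cons.1 hi
    · rw [geometricRep_wordProd_single_of_forall cs fun b hb ↦ (M.symmetric b i).trans (ha b hb)]
      exact Module.reflection_apply_self _
    · rw [ih hω' hiω, map_neg, simpleRootReflection_single_of_eq_two (ha i hiω)]

lemma subset_of_wordProd_eq_of_pairwise_eq_two {ω l : List B} (hω : ω.Pairwise fun a b ↦ M a b = 2)
    (h : cs.wordProd ω = cs.wordProd l) : ω ⊆ l := by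
  intro i hi
  by_contra hil
  have hcoord := geometricRep_wordProd_apply_of_notMem cs hil (Finsupp.single i 1)
  rw [← h, geometricRep_wordProd_single_of_mem cs hω hi] at hcoord
  norm_num at hcoord

lemma isReduced_of_pairwise_eq_two {ω : List B} (hω : ω.Pairwise fun a b ↦ M a b = 2) :
    cs.IsReduced ω := by
  obtain ⟨l, hl, hωl⟩ := cs.exists_isReduced (cs.wordProd ω)
  have hnodup : ω.Nodup := hω.imp fun hab heq ↦ by simp [heq] at hab
  refine le_antisymm (cs.length_wordProd_le ω) ?_
  rw [hωl, hl.eq]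
  exact (hnodup.subperm (subset_of_wordProd_eq_of_pairwise_eq_two cs hω hωl)).length_le

end GeometricRepresentation

section FullyCommutative

variable {B W : Type*} [Group W] {M : CoxeterMatrix B} {cs : CoxeterSystem M W}

lemma isReduced_cons_of_wordProd_eq {a : B} {l l' : List B} (h : cs.IsReduced (a :: l))
    (hl' : cs.IsReduced l') (heq : cs.wordProd l' = cs.wordProd l) :
    cs.IsReduced (a :: l') := by
  have hl : cs.IsReduced l := by simpa using h.drop 1
  have hlen : l'.length = l.length := by rw [← hl'.eq, ← hl.eq, heq]
  have hprod : cs.wordProd (a :: l') = cs.wordProd (a :: l) := by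
    rw [wordProd_cons, wordProd_cons, heq]
  rw [CoxeterSystem.IsReduced, hprod, h.eq, List.length_cons, List.length_cons, hlen]

lemma FullyCommutative.of_cons {a : B} {l : List B}
    (hfc : FullyCommutative cs (cs.wordProd (a :: l))) (h : cs.IsReduced (a :: l)) :
    FullyCommutative cs (cs.wordProd l) := by
  intro l₁ l₂ h₁ e₁ h₂ e₂
  have hequiv : CommEquiv M (a :: l₁) (a :: l₂) :=
    hfc _ _ (isReduced_cons_of_wordProd_eq h h₁ e₁) (by rw [wordProd_cons, wordProd_cons, e₁])
      (isReduced_cons_of_wordProd_eq h h₂ e₂) (by rw [wordProd_cons, wordProd_cons, e₂])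
  exact hequiv.of_cons

lemma FullyCommutative.inv {w : W} (hfc : FullyCommutative cs w) : FullyCommutative cs w⁻¹ := by
  intro l₁ l₂ h₁ e₁ h₂ e₂
  simpa using (hfc l₁.reverse l₂.reverse h₁.reverse (by simp [e₁]) h₂.reverse
    (by simp [e₂])).reverse

lemma FullyCommutative.of_append_singleton {a : B} {l : List B}
    (hfc : FullyCommutative cs (cs.wordProd (l ++ [a]))) (h : cs.IsReduced (l ++ [a])) :
    FullyCommutative cs (cs.wordProd l) := by
  have hfc' : FullyCommutative cs (cs.wordProd (a :: l.reverse)) := by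
    simpa [← wordProd_reverse] using hfc.inv
  simpa using (hfc'.of_cons (by simpa using h.reverse)).inv

/-- The invariant `n(w)`, computed on an arbitrarily chosen reduced word of `w`; it is independent
of that choice when `w` is fully commutative. -/
noncomputable def heapWidth (cs : CoxeterSystem M W) (w : W) : ℕ :=
  heapN M (cs.exists_isReduced w).choose

lemma FullyCommutative.heapN_eq_heapWidth {l : List B}
    (hfc : FullyCommutative cs (cs.wordProd l)) (hl : cs.IsReduced l) :
    heapN M l = heapWidth cs (cs.wordProd l) :=
  have hchosen := (cs.exists_isReduced (cs.wordProd l)).choose_spec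
  (hfc _ _ hl rfl hchosen.1 hchosen.2.symm).heapN_eq

end FullyCommutative

section LowerStar

variable {B W : Type*} [Group W] {M : CoxeterMatrix B} {cs : CoxeterSystem M W}

lemma LowerStarStep.fullyCommutative {x y : W} (h : LowerStarStep cs x y)
    (hx : FullyCommutative cs x) : FullyCommutative cs y := by
  obtain ⟨l, a, b, -, ⟨hl, rfl, rfl⟩ | ⟨hl, rfl, rfl⟩⟩ := h
  · exact hx.of_cons hl
  · rw [List.append_cons] at hl hx
    exact hx.of_append_singleton hl

lemma LowerStarStep.heapWidth_eq {x y : W} (h : LowerStarStep cs x y)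
    (hx : FullyCommutative cs x) : heapWidth cs x = heapWidth cs y := by
  have hy := h.fullyCommutative hx
  obtain ⟨l, a, b, hab, ⟨hl, rfl, rfl⟩ | ⟨hl, rfl, rfl⟩⟩ := h
  · have hl' : cs.IsReduced (b :: l) := by simpa using hl.drop 1
    rw [← hx.heapN_eq_heapWidth hl, ← hy.heapN_eq_heapWidth hl', heapN_cons_cons (by omega)]
  · have hl' : cs.IsReduced (l ++ [b]) := by
      simpa [List.take_append, List.take_of_length_le] using hl.take (l.length + 1)
    rw [← hx.heapN_eq_heapWidth hl, ← hy.heapN_eq_heapWidth hl', heapN_append_pair (by omega)]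

lemma fullyCommutative_and_heapWidth_eq_of_reflTransGen {x y : W}
    (h : Relation.ReflTransGen (LowerStarStep cs) x y) (hx : FullyCommutative cs x) :
    FullyCommutative cs y ∧ heapWidth cs x = heapWidth cs y := by
  induction h with
  | refl => exact ⟨hx, rfl⟩
  | tail _ hstep ih =>
    obtain ⟨hfc, heq⟩ := ih
    exact ⟨hstep.fullyCommutative hfc, heq.trans (hstep.heapWidth_eq hfc)⟩

end LowerStar

/-- if a fully commutative `w` is star reducible (by a sequence of lower
star operations) to a product of `k` mutually commuting generators, then the maximal
antichain size of the heap of `w` is `k`, i.e. `n(w) = k`. -/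
theorem stmt16 {B W : Type*} [Group W] {M : CoxeterMatrix B} (cs : CoxeterSystem M W)
    (w : W) (hfc : FullyCommutative cs w)
    (k : ℕ) (σ : Fin k → B) (hinj : Function.Injective σ)
    (hcomm : ∀ i j, i ≠ j → M (σ i) (σ j) = 2)
    (hred : Relation.ReflTransGen (LowerStarStep cs) w (cs.wordProd (List.ofFn σ))) :
    ∀ l : List B, cs.IsReduced l → cs.wordProd l = w → heapN M l = k := by
  rintro l hl rfl
  have hσ : (List.ofFn σ).Pairwise fun a b ↦ M a b = 2 :=
    List.pairwise_ofFn.2 fun i j hij ↦ hcomm i j hij.ne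
  obtain ⟨hfc', hwidth⟩ := fullyCommutative_and_heapWidth_eq_of_reflTransGen hred hfc
  calc heapN M l
    _ = heapWidth cs (cs.wordProd l) := hfc.heapN_eq_heapWidth hl
    _ = heapWidth cs (cs.wordProd (List.ofFn σ)) := hwidth
    _ = heapN M (List.ofFn σ) := (hfc'.heapN_eq_heapWidth (isReduced_of_pairwise_eq_two cs hσ)).symm
    _ = (List.ofFn σ).length := heapN_eq_length_of_pairwise_eq_two hσ
    _ = k := List.length_ofFn
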